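/- A coalgebra morphism f : C → D is injective if and only if its restriction to the first term C_{(1)} of the coradical filtration is injective. -/

import Mathlib

/-!
Work in the convolution algebra `C*`. A point `x : C` lies in a finite-dimensional subcoalgebra,
whose annihilator `N` is a two-sided ideal with `C* ⧸ N` finite-dimensional; let `J` be the Jacobson
radical of `C* ⧸ N`, which is nilpotent. A maximal two-sided ideal above `N` is the annihilator of a
simple subcoalgebra, so functionals vanishing on the coradical map into `J` and, by induction, those
vanishing on `C_(n)` map into `J ^ (n + 1)`.

If `f` is injective on `C_(1)`, every functional on `C` agrees on `C_(1)` with some `ψ ∘ f`, so the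
image `T` of `D*` in `C* ⧸ N` satisfies `T + J ^ 2 = C* ⧸ N`. As `T` is a subring and `J` is
nilpotent, this forces `T = C* ⧸ N`. Hence every functional `φ` on `C` has a `ψ` with
`φ x = ψ (f x)`, and `f x = 0` implies `x = 0`.
-/

open TensorProduct

variable (k : Type*) [Field k]
variable (C : Type*) [AddCommGroup C] [Module k C] [Coalgebra k C]

/-- The image of `D ⊗ E` inside `C ⊗ C`, for submodules `D E : Submodule k C`. -/
noncomputable def tensorSub (D E : Submodule k C) : Submodule k (C ⊗[k] C) :=
  LinearMap.range (TensorProduct.map D.subtype E.subtype)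

/-- A submodule `D ⊆ C` is a subcoalgebra if `Δ(D) ⊆ D ⊗ D`. -/
def IsSubcoalgebra (D : Submodule k C) : Prop :=
  ∀ x ∈ D, Coalgebra.comul (R := k) x ∈ tensorSub k C D D

/-- The coradical of `C`: the sum of all simple subcoalgebras. -/
def coradical : Submodule k C :=
  sSup {D | IsSubcoalgebra k C D ∧ D ≠ ⊥ ∧
    ∀ E ≤ D, IsSubcoalgebra k C E → E = ⊥ ∨ E = D}

/-- The coradical filtration `C_(0) ⊆ C_(1) ⊆ ⋯`, with
`C_(n) = Δ⁻¹(C ⊗ C_(n-1) + C_(0) ⊗ C)`. -/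
noncomputable def coradFilt : ℕ → Submodule k C
  | 0 => coradical k C
  | n+1 => Submodule.comap (Coalgebra.comul (R := k))
      (tensorSub k C ⊤ (coradFilt n) ⊔ tensorSub k C (coradical k C) ⊤)

section Rings

theorem isCoatomistic_of_orderIso {α β : Type*} [PartialOrder α] [OrderTop α] [PartialOrder β]
    [OrderTop β] [IsCoatomistic α] (e : α ≃o β) : IsCoatomistic β := by
  refine ⟨fun b => ?_⟩
  obtain ⟨s, hs, hcoatom⟩ := IsCoatomistic.isGLB_coatoms (e.symm b)
  exact ⟨e '' s, e.isGLB_image.mpr hs,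
    Set.forall_mem_image.mpr fun a ha => (e.isCoatom_iff a).mpr (hcoatom a ha)⟩

variable {R S : Type*} [Ring R] [Ring S]

instance isCoatomistic_twoSidedIdeal [IsSemisimpleRing R] : IsCoatomistic (TwoSidedIdeal R) :=
  isCoatomistic_of_orderIso <| (OrderIso.setIsotypicComponents (R := R) (M := R)).trans <|
    (OrderIso.setCongr (fullyInvariantSubmodule R R : Set (Ideal R)) _
      (Set.ext fun _ => isFullyInvariant_iff_isTwoSided)).trans
      TwoSidedIdeal.orderIsoIsTwoSided.symm

theorem exists_isCoatom_notMem_of_ne_zero [IsCoatomistic (TwoSidedIdeal R)] {r : R}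
    (hr : r ≠ 0) : ∃ P : TwoSidedIdeal R, IsCoatom P ∧ r ∉ P := by
  obtain ⟨s, hs, hcoatom⟩ := eq_sInf_coatoms (⊥ : TwoSidedIdeal R)
  rw [Ne, ← TwoSidedIdeal.mem_bot R, hs, TwoSidedIdeal.mem_sInf] at hr
  push Not at hr
  obtain ⟨P, hPs, hrP⟩ := hr
  exact ⟨P, hcoatom P hPs, hrP⟩

theorem isCoatom_comap_of_surjective {f : R →+* S} (hf : Function.Surjective f)
    {P : TwoSidedIdeal S} (hP : IsCoatom P) : IsCoatom (P.comap f) := by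
  have : RingHomSurjective f := ⟨hf⟩
  refine ⟨fun h => hP.1 ?_, fun Q hQ => ?_⟩
  · rw [← TwoSidedIdeal.one_mem_iff] at h ⊢
    rwa [TwoSidedIdeal.mem_comap, map_one] at h
  have hker : (⊥ : Ideal S).comap f ≤ Q.asIdeal := fun x hx =>
    hQ.le ((TwoSidedIdeal.mem_comap f).mpr ((Ideal.mem_bot.mp hx).symm ▸ zero_mem P))
  have map_mem {x : R} : f x ∈ (Q.asIdeal.map f).toTwoSided ↔ x ∈ Q := by
    rw [Ideal.mem_toTwoSided, ← Ideal.mem_comap, Ideal.comap_map_of_surjective f hf,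
      sup_eq_left.mpr hker, TwoSidedIdeal.mem_asIdeal]
  have hlt : P < (Q.asIdeal.map f).toTwoSided := by
    obtain ⟨hle, q, hqQ, hqP⟩ := SetLike.lt_iff_le_and_exists.mp hQ
    refine SetLike.lt_iff_le_and_exists.mpr ⟨fun y hy => ?_, f q, map_mem.mpr hqQ,
      mt (TwoSidedIdeal.mem_comap f).mpr hqP⟩
    obtain ⟨x, rfl⟩ := hf y
    exact map_mem.mpr (hle ((TwoSidedIdeal.mem_comap f).mpr hy))
  rw [← TwoSidedIdeal.one_mem_iff, ← map_mem, hP.2 _ hlt]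
  trivial

theorem exists_isCoatom_notMem_of_notMem_jacobson [IsSemisimpleRing (R ⧸ Ring.jacobson R)] {r : R}
    (hr : r ∉ Ring.jacobson R) : ∃ P : TwoSidedIdeal R, IsCoatom P ∧ r ∉ P := by
  obtain ⟨P, hP, hrP⟩ := exists_isCoatom_notMem_of_ne_zero
    (show Ideal.Quotient.mk (Ring.jacobson R) r ≠ 0 from mt Ideal.Quotient.eq_zero_iff_mem.mp hr)
  exact ⟨P.comap (Ideal.Quotient.mk _),
    isCoatom_comap_of_surjective Ideal.Quotient.mk_surjective hP, hrP⟩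

theorem pow_le_sup_pow_succ {T : Subring R} {J : Ideal R} [J.IsTwoSided]
    (h : T.toAddSubgroup ⊔ (J ^ 2).toAddSubgroup = ⊤) (n : ℕ) :
    (J ^ (n + 1)).toAddSubgroup ≤ T.toAddSubgroup ⊔ (J ^ (n + 2)).toAddSubgroup := by
  induction n with
  | zero => exact h ▸ le_top
  | succ n ih =>
    intro z hz
    rw [Submodule.mem_toAddSubgroup, Ideal.IsTwoSided.pow_succ] at hz
    refine Submodule.smul_induction_on hz (fun x hx y hy => ?_) fun x y hx hy => add_mem hx hy
    obtain ⟨s, hs, u, hu, rfl⟩ : ∃ s ∈ T, ∃ u ∈ J ^ 2, s + u = x :=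
      AddSubgroup.mem_sup.mp (h ▸ AddSubgroup.mem_top x)
    obtain ⟨t, ht, v, hv, rfl⟩ : ∃ t ∈ T, ∃ v ∈ J ^ (n + 2), t + v = y :=
      AddSubgroup.mem_sup.mp (ih hy)
    -- `(s + u) * y = s * t + (s * v + u * y)`, with `s * t ∈ T` and the rest in `J ^ (n + 3)`.
    have hsJ : s ∈ J := (J.add_mem_iff_left (Ideal.pow_le_self two_ne_zero hu)).mp hx
    have hsv : s * v ∈ J ^ (n + 3) := by
      rw [Ideal.IsTwoSided.pow_succ]
      exact Ideal.mul_mem_mul hsJ hv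
    have huy : u * (t + v) ∈ J ^ (n + 3) := by
      rw [show n + 3 = 2 + (n + 1) by omega, Ideal.IsTwoSided.pow_add]
      exact Ideal.mul_mem_mul hu hy
    refine AddSubgroup.mem_sup.mpr
      ⟨s * t, T.mul_mem hs ht, s * v + u * (t + v), add_mem hsv huy, ?_⟩
    simp only [smul_eq_mul]
    noncomm_ring

theorem sup_pow_eq_top_of_sup_sq_eq_top {T : Subring R} {J : Ideal R} [J.IsTwoSided]
    (h : T.toAddSubgroup ⊔ (J ^ 2).toAddSubgroup = ⊤) (n : ℕ) :
    T.toAddSubgroup ⊔ (J ^ (n + 2)).toAddSubgroup = ⊤ := by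
  induction n with
  | zero => exact h
  | succ n ih => exact top_le_iff.mp (ih ▸ sup_le le_sup_left (pow_le_sup_pow_succ h (n + 1)))

theorem subring_eq_top_of_sup_sq_eq_top {T : Subring R} {J : Ideal R} [J.IsTwoSided]
    (hJ : IsNilpotent J) (h : T.toAddSubgroup ⊔ (J ^ 2).toAddSubgroup = ⊤) : T = ⊤ := by
  obtain ⟨n, hn⟩ := hJ
  have hbot : J ^ (n + 2) = ⊥ := by rw [Ideal.IsTwoSided.pow_add, hn, zero_mul, Ideal.zero_eq_bot]
  have hT := sup_pow_eq_top_of_sup_sq_eq_top h n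
  rw [hbot, Submodule.bot_toAddSubgroup, sup_bot_eq] at hT
  exact Subring.toAddSubgroup_injective hT

end Rings

section Duality

variable {K V W : Type*} [Field K] [AddCommGroup V] [Module K V] [AddCommGroup W] [Module K W]

theorem exists_isProj (U : Submodule K V) : ∃ p : V →ₗ[K] V, LinearMap.IsProj U p := by
  obtain ⟨W, hUW⟩ := U.exists_isCompl
  exact ⟨U.projection W hUW, U.projection_apply_mem hUW,
    fun _ => U.projection_apply_of_mem_left hUW⟩

theorem comp_id_sub_mem_dualAnnihilator {U : Submodule K V} {p : V →ₗ[K] V}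
    (hp : LinearMap.IsProj U p) (a : Module.Dual K V) :
    a ∘ₗ (LinearMap.id - p) ∈ U.dualAnnihilator := by
  refine (Submodule.mem_dualAnnihilator _).mpr fun x hx => ?_
  simp [hp.map_id x hx]

theorem eq_zero_of_forall_mul'_map_eq_zero {t : V ⊗[K] W}
    (h : ∀ (a : Module.Dual K V) (b : Module.Dual K W),
      LinearMap.mul' K K (TensorProduct.map a b t) = 0) : t = 0 := by
  let v := Module.Basis.ofVectorSpace K V
  let w := Module.Basis.ofVectorSpace K W
  refine (v.tensorProduct w).ext_elem fun ⟨i, j⟩ => ?_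
  have hcoord : (v.tensorProduct w).coord (i, j) =
      LinearMap.mul' K K ∘ₗ TensorProduct.map (v.coord i) (w.coord j) := by
    ext x y
    simp [mul_comm]
  simpa [h] using LinearMap.congr_fun hcoord t

theorem map_eq_zero_of_forall_mul'_map_comp_eq_zero {V' W' : Type*} [AddCommGroup V']
    [Module K V'] [AddCommGroup W'] [Module K W'] {t : V ⊗[K] W} {f : V →ₗ[K] V'} {g : W →ₗ[K] W'}
    (h : ∀ (a : Module.Dual K V') (b : Module.Dual K W'),
      LinearMap.mul' K K (TensorProduct.map (a ∘ₗ f) (b ∘ₗ g) t) = 0) :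
    TensorProduct.map f g t = 0 :=
  eq_zero_of_forall_mul'_map_eq_zero fun a b => by
    rw [TensorProduct.map_map]
    exact h a b

theorem exists_sub_comp_mem_dualAnnihilator {f : V →ₗ[K] W} {U : Submodule K V}
    (hf : Set.InjOn f U) (φ : Module.Dual K V) :
    ∃ ψ : Module.Dual K W, φ - ψ ∘ₗ f ∈ U.dualAnnihilator := by
  have hinj : Function.Injective (f ∘ₗ U.subtype) := fun x y hxy => Subtype.ext (hf x.2 y.2 hxy)
  obtain ⟨ψ, hψ⟩ := LinearMap.dualMap_surjective_of_injective hinj (φ ∘ₗ U.subtype)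
  refine ⟨ψ, (Submodule.mem_dualAnnihilator _).mpr fun x hx => ?_⟩
  exact sub_eq_zero.mpr (LinearMap.congr_fun hψ ⟨x, hx⟩).symm

theorem dualAnnihilator_dualCoannihilator_eq_of_le {E : Submodule K V} [FiniteDimensional K E]
    {Φ : Submodule K (Module.Dual K V)} (hE : E.dualAnnihilator ≤ Φ) :
    Φ.dualCoannihilator.dualAnnihilator = Φ := by
  refine le_antisymm (fun φ hφ => ?_) Φ.le_dualCoannihilator_dualAnnihilator
  rw [← E.dualRestrict_ker_eq_dualAnnihilator] at hE
  rw [← Submodule.comap_map_eq_self hE, Submodule.mem_comap,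
    ← Subspace.dualCoannihilator_dualAnnihilator_eq (W := Φ.map E.dualRestrict),
    Submodule.mem_dualAnnihilator]
  intro x hx
  refine (Submodule.mem_dualAnnihilator _).mp hφ x <|
    (Submodule.mem_dualCoannihilator _).mpr fun ψ hψ => ?_
  exact (Submodule.mem_dualCoannihilator _).mp hx _ (Submodule.mem_map_of_mem hψ)

theorem finite_of_surjective_of_dualAnnihilator_le_ker {E : Submodule K V} [FiniteDimensional K E]
    {g : Module.Dual K V →ₗ[K] W} (hg : Function.Surjective g)
    (hE : E.dualAnnihilator ≤ LinearMap.ker g) : Module.Finite K W := by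
  have : Module.Finite K (Module.Dual K V ⧸ E.dualAnnihilator) :=
    Module.Finite.equiv (Subspace.quotAnnihilatorEquiv E).symm
  refine Module.Finite.of_surjective (E.dualAnnihilator.liftQ g hE) (LinearMap.range_eq_top.mp ?_)
  rw [Submodule.range_liftQ, LinearMap.range_eq_top.mpr hg]

end Duality

section TensorSub

variable {k C}
omit [Coalgebra k C]

theorem map_mem_tensorSub {U W : Submodule k C} {p q : C →ₗ[k] C} (hp : ∀ x, p x ∈ U)
    (hq : ∀ x, q x ∈ W) (t : C ⊗[k] C) : TensorProduct.map p q t ∈ tensorSub k C U W :=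
  ⟨TensorProduct.map (p.codRestrict U hp) (q.codRestrict W hq) t, TensorProduct.map_map ..⟩

theorem mem_tensorSub_iff {U W : Submodule k C} {t : C ⊗[k] C} :
    t ∈ tensorSub k C U W ↔ ∀ a b : Module.Dual k C,
      a ∈ U.dualAnnihilator ∨ b ∈ W.dualAnnihilator →
        LinearMap.mul' k k (TensorProduct.map a b t) = 0 := by
  refine ⟨?_, fun h => ?_⟩
  · rintro ⟨s, rfl⟩ a b hab
    have hcomp : LinearMap.mul' k k ∘ₗ TensorProduct.map (a ∘ₗ U.subtype) (b ∘ₗ W.subtype) = 0 := by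
      ext x y
      rcases hab with ha | hb
      · simp [(Submodule.mem_dualAnnihilator a).mp ha x x.2]
      · simp [(Submodule.mem_dualAnnihilator b).mp hb y y.2]
    rw [TensorProduct.map_map]
    exact LinearMap.congr_fun hcomp s
  obtain ⟨p, hp⟩ := exists_isProj U
  obtain ⟨q, hq⟩ := exists_isProj W
  have split : LinearMap.id = TensorProduct.map (LinearMap.id - p) LinearMap.id +
      TensorProduct.map p (LinearMap.id - q) + TensorProduct.map p q := by
    ext
    simp [sub_tmul, tmul_sub]
  have hU : TensorProduct.map (LinearMap.id - p) LinearMap.id t = 0 :=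
    map_eq_zero_of_forall_mul'_map_comp_eq_zero fun a b =>
      h _ _ (.inl (comp_id_sub_mem_dualAnnihilator hp a))
  have hW : TensorProduct.map p (LinearMap.id - q) t = 0 :=
    map_eq_zero_of_forall_mul'_map_comp_eq_zero fun a b =>
      h _ _ (.inr (comp_id_sub_mem_dualAnnihilator hq b))
  have ht : t = TensorProduct.map p q t := by
    simpa [hU, hW] using LinearMap.congr_fun split t
  exact ht ▸ map_mem_tensorSub hp.map_mem hq.map_mem t

theorem mem_tensorSub_top_sup_tensorSub_top_iff {U W : Submodule k C} {t : C ⊗[k] C} :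
    t ∈ tensorSub k C ⊤ W ⊔ tensorSub k C U ⊤ ↔
      ∀ a ∈ U.dualAnnihilator, ∀ b ∈ W.dualAnnihilator,
        LinearMap.mul' k k (TensorProduct.map a b t) = 0 := by
  refine ⟨fun ht a ha b hb => ?_, fun h => ?_⟩
  · obtain ⟨u, hu, v, hv, rfl⟩ := Submodule.mem_sup.mp ht
    rw [map_add, map_add, mem_tensorSub_iff.mp hu a b (.inr hb),
      mem_tensorSub_iff.mp hv a b (.inl ha), add_zero]
  obtain ⟨p, hp⟩ := exists_isProj U
  obtain ⟨q, hq⟩ := exists_isProj W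
  have split : LinearMap.id = TensorProduct.map (LinearMap.id - p) (LinearMap.id - q) +
      (TensorProduct.map LinearMap.id q + TensorProduct.map p (LinearMap.id - q)) := by
    ext
    simp only [sub_tmul, tmul_sub, AlgebraTensorModule.curry_apply,
      LinearMap.restrictScalars_self, curry_apply, LinearMap.id_apply, LinearMap.add_apply,
      map_tmul, LinearMap.sub_apply]
    abel
  have hUW : TensorProduct.map (LinearMap.id - p) (LinearMap.id - q) t = 0 :=
    map_eq_zero_of_forall_mul'_map_comp_eq_zero fun a b => h _
      (comp_id_sub_mem_dualAnnihilator hp a) _ (comp_id_sub_mem_dualAnnihilator hq b)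
  have ht : t = TensorProduct.map LinearMap.id q t + TensorProduct.map p (LinearMap.id - q) t := by
    simpa [hUW] using LinearMap.congr_fun split t
  rw [ht]
  exact Submodule.add_mem_sup (map_mem_tensorSub (fun _ => Submodule.mem_top) hq.map_mem t)
    (map_mem_tensorSub hp.map_mem (fun _ => Submodule.mem_top) t)

end TensorSub

section ConvDual

open WithConv

/-- The dual algebra of a coalgebra: linear functionals with the convolution product. -/
abbrev ConvDual := WithConv (Module.Dual k C)

variable {k C}

/-- The functionals underlying an ideal of the dual algebra. -/
noncomputable def dualSubspace (I : Ideal (ConvDual k C)) : Submodule k (Module.Dual k C) :=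
  (I.restrictScalars k).comap (WithConv.linearEquiv k (Module.Dual k C)).symm.toLinearMap

/-- The subspace of `C` annihilated by an ideal of the dual algebra, often written `I^⊥`. -/
noncomputable def coann (I : Ideal (ConvDual k C)) : Submodule k C :=
  (dualSubspace I).dualCoannihilator

/-- Openness of an ideal in the finite topology of the dual algebra, whose basic neighbourhoods
of `0` are the annihilators of the finite-dimensional subspaces of `C`. -/
def IsOpenIdeal (I : Ideal (ConvDual k C)) : Prop :=
  ∃ E : Submodule k C, FiniteDimensional k E ∧ E.dualAnnihilator ≤ dualSubspace I

theorem IsOpenIdeal.mono {I J : Ideal (ConvDual k C)} (hI : IsOpenIdeal I) (hIJ : I ≤ J) :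
    IsOpenIdeal J := by
  obtain ⟨E, hE, hEI⟩ := hI
  exact ⟨E, hE, hEI.trans fun φ hφ => hIJ hφ⟩

theorem IsOpenIdeal.dualAnnihilator_coann {I : Ideal (ConvDual k C)} (hI : IsOpenIdeal I) :
    (coann I).dualAnnihilator = dualSubspace I := by
  obtain ⟨E, _, hE⟩ := hI
  exact dualAnnihilator_dualCoannihilator_eq_of_le hE

theorem IsOpenIdeal.finite_quotient {I : Ideal (ConvDual k C)} [I.IsTwoSided]
    (hI : IsOpenIdeal I) : Module.Finite k (ConvDual k C ⧸ I) := by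
  obtain ⟨E, _, hE⟩ := hI
  refine finite_of_surjective_of_dualAnnihilator_le_ker (E := E)
    (g := (Ideal.Quotient.mkₐ k I).toLinearMap ∘ₗ
      (WithConv.linearEquiv k (Module.Dual k C)).symm.toLinearMap)
    ((Ideal.Quotient.mkₐ_surjective k I).comp (LinearEquiv.surjective _)) fun φ hφ => ?_
  exact Ideal.Quotient.eq_zero_iff_mem.mpr (hE hφ)

theorem isSubcoalgebra_iff_mul_mem_dualAnnihilator {F : Submodule k C} :
    IsSubcoalgebra k C F ↔ ∀ a b : ConvDual k C,
      a.ofConv ∈ F.dualAnnihilator ∨ b.ofConv ∈ F.dualAnnihilator →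
        (a * b).ofConv ∈ F.dualAnnihilator := by
  simp only [IsSubcoalgebra, mem_tensorSub_iff]
  refine ⟨fun h a b hab => (Submodule.mem_dualAnnihilator _).mpr fun x hx =>
    h x hx a.ofConv b.ofConv hab, fun h x hx a b hab => ?_⟩
  exact (Submodule.mem_dualAnnihilator _).mp (h (toConv a) (toConv b) hab) x hx

theorem IsOpenIdeal.isSubcoalgebra_coann {I : Ideal (ConvDual k C)} [I.IsTwoSided]
    (hI : IsOpenIdeal I) : IsSubcoalgebra k C (coann I) := by
  rw [isSubcoalgebra_iff_mul_mem_dualAnnihilator, hI.dualAnnihilator_coann]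
  rintro a b (ha | hb)
  · exact I.mul_mem_right b ha
  · exact I.mul_mem_left a hb

/-- The two-sided ideal `F^⊥` of functionals that vanish on a subcoalgebra `F`. -/
noncomputable def annIdeal (F : Submodule k C) (hF : IsSubcoalgebra k C F) :
    TwoSidedIdeal (ConvDual k C) :=
  .mk' {a | a.ofConv ∈ F.dualAnnihilator} F.dualAnnihilator.zero_mem F.dualAnnihilator.add_mem
    F.dualAnnihilator.neg_mem
    (fun hb => isSubcoalgebra_iff_mul_mem_dualAnnihilator.mp hF _ _ (.inr hb))
    (fun ha => isSubcoalgebra_iff_mul_mem_dualAnnihilator.mp hF _ _ (.inl ha))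

theorem mem_annIdeal {F : Submodule k C} {hF : IsSubcoalgebra k C F} {a : ConvDual k C} :
    a ∈ annIdeal F hF ↔ a.ofConv ∈ F.dualAnnihilator :=
  TwoSidedIdeal.mem_mk' ..

theorem coann_annIdeal (F : Submodule k C) (hF : IsSubcoalgebra k C F) :
    coann (annIdeal F hF).asIdeal = F := by
  have hann : dualSubspace (annIdeal F hF).asIdeal = F.dualAnnihilator :=
    Submodule.ext fun φ => mem_annIdeal (hF := hF)
  rw [coann, hann, Subspace.dualAnnihilator_dualCoannihilator_eq]

theorem coann_top : coann (⊤ : Ideal (ConvDual k C)) = ⊥ := by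
  have htop : dualSubspace (⊤ : Ideal (ConvDual k C)) = ⊤ := Submodule.ext fun φ => .rfl
  rw [coann, htop, Submodule.dualCoannihilator_top]

theorem coann_le_coradical {P : TwoSidedIdeal (ConvDual k C)} (hP : IsCoatom P)
    (hopen : IsOpenIdeal P.asIdeal) : coann P.asIdeal ≤ coradical k C := by
  refine le_sSup ⟨hopen.isSubcoalgebra_coann, fun hbot => hP.1 ?_, fun F hFP hF => ?_⟩
  · have h := hopen.dualAnnihilator_coann
    rw [hbot, Submodule.dualAnnihilator_bot] at h
    rw [← TwoSidedIdeal.one_mem_iff]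
    exact h.le (Submodule.mem_top (x := (1 : ConvDual k C).ofConv))
  have hle : P ≤ annIdeal F hF := fun a ha => mem_annIdeal.mpr <|
    Submodule.dualAnnihilator_anti hFP (hopen.dualAnnihilator_coann.ge ha)
  rw [← coann_annIdeal F hF]
  rcases hP.le_iff.mp hle with h | h
  · left
    rw [h, TwoSidedIdeal.top_asIdeal, coann_top]
  · right
    rw [h]

theorem mem_coradFilt_succ_iff {n : ℕ} {x : C} : x ∈ coradFilt k C (n + 1) ↔
    ∀ a ∈ (coradical k C).dualAnnihilator, ∀ b ∈ (coradFilt k C n).dualAnnihilator,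
      (toConv a * toConv b) x = 0 :=
  mem_tensorSub_top_sup_tensorSub_top_iff

theorem mk_mem_jacobson_of_mem_dualAnnihilator_coradical {N : Ideal (ConvDual k C)}
    [N.IsTwoSided] (hN : IsOpenIdeal N) {a : ConvDual k C}
    (ha : a.ofConv ∈ (coradical k C).dualAnnihilator) :
    Ideal.Quotient.mk N a ∈ Ring.jacobson (ConvDual k C ⧸ N) := by
  have := hN.finite_quotient
  have : IsArtinianRing (ConvDual k C ⧸ N) := .of_finite k _
  by_contra hJ
  obtain ⟨P, hP, haP⟩ := exists_isCoatom_notMem_of_notMem_jacobson hJ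
  have hPcoatom := isCoatom_comap_of_surjective Ideal.Quotient.mk_surjective hP
  have hNP : N ≤ (P.comap (Ideal.Quotient.mk N)).asIdeal := fun b hb => by
    rw [TwoSidedIdeal.mem_asIdeal, TwoSidedIdeal.mem_comap, Ideal.Quotient.eq_zero_iff_mem.mpr hb]
    exact zero_mem P
  have hopen := hN.mono hNP
  have hmem : a ∈ P.comap (Ideal.Quotient.mk N) := hopen.dualAnnihilator_coann.le
    (Submodule.dualAnnihilator_anti (coann_le_coradical hPcoatom hopen) ha)
  exact haP ((TwoSidedIdeal.mem_comap _).mp hmem)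

theorem mk_mem_jacobson_pow_of_mem_dualAnnihilator_coradFilt {N : Ideal (ConvDual k C)}
    [N.IsTwoSided] (hN : IsOpenIdeal N) {n : ℕ} {a : ConvDual k C}
    (ha : a.ofConv ∈ (coradFilt k C n).dualAnnihilator) :
    Ideal.Quotient.mk N a ∈ Ring.jacobson (ConvDual k C ⧸ N) ^ (n + 1) := by
  induction n generalizing a with
  | zero =>
    rw [Submodule.pow_one]
    exact mk_mem_jacobson_of_mem_dualAnnihilator_coradical hN ha
  | succ n ih =>
    let Q := (Ring.jacobson (ConvDual k C ⧸ N) ^ (n + 2)).comap (Ideal.Quotient.mk N)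
    have hNQ : N ≤ Q := fun b hb => by
      rw [Ideal.mem_comap, Ideal.Quotient.eq_zero_iff_mem.mpr hb]
      exact zero_mem _
    have hQ : coann Q ≤ coradFilt k C (n + 1) := fun x hx =>
      mem_coradFilt_succ_iff.mpr fun b hb c hc =>
        (Submodule.mem_dualCoannihilator x).mp hx (toConv b * toConv c).ofConv <| by
          change Ideal.Quotient.mk N (toConv b * toConv c) ∈
            Ring.jacobson (ConvDual k C ⧸ N) ^ (n + 2)
          rw [map_mul, Ideal.IsTwoSided.pow_succ]
          exact Ideal.mul_mem_mul
            (mk_mem_jacobson_of_mem_dualAnnihilator_coradical hN hb) (ih hc)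
    exact (hN.mono hNQ).dualAnnihilator_coann.le (Submodule.dualAnnihilator_anti hQ ha)

/-- The annihilator of the subcoalgebra generated by `x`: the largest two-sided ideal of the dual
algebra whose elements vanish at `x`. -/
noncomputable def annGenerated (x : C) : Ideal (ConvDual k C) where
  carrier := {a | ∀ b c : ConvDual k C, (b * (a * c)) x = 0}
  add_mem' ha ha' b c := by
    rw [add_mul, mul_add, ofConv_add, LinearMap.add_apply, ha, ha', add_zero]
  zero_mem' b c := by simp
  smul_mem' d a ha b c := by
    rw [smul_eq_mul, mul_assoc, ← mul_assoc b d]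
    exact ha _ _

instance isTwoSided_annGenerated (x : C) : (annGenerated (k := k) x).IsTwoSided :=
  ⟨fun d ha b c => by rw [mul_assoc]; exact ha _ _⟩

theorem apply_eq_zero_of_mem_annGenerated {x : C} {a : ConvDual k C}
    (ha : a ∈ annGenerated (k := k) x) : a x = 0 := by
  simpa only [one_mul, mul_one] using ha 1 1

theorem isOpenIdeal_annGenerated (x : C) : IsOpenIdeal (annGenerated (k := k) x) := by
  obtain ⟨_, F, _, hF, hxF⟩ := TensorProduct.exists_finite_submodule_of_setFinite
    ({Coalgebra.comul (R := k) x} : Set (C ⊗[k] C)) (Set.finite_singleton _)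
  obtain ⟨s, rfl⟩ := Module.Finite.iff_fg.mp hF
  obtain ⟨E, _, hE, _, hsE⟩ := TensorProduct.exists_finite_submodule_of_setFinite
    (Coalgebra.comul (R := k) (A := C) '' s) (s.finite_toSet.image _)
  refine ⟨E, hE, fun a ha b c => ?_⟩
  have hac : (toConv a * c).ofConv ∈ (Submodule.span k (s : Set C)).dualAnnihilator := by
    rw [Submodule.mem_dualAnnihilator]
    refine fun y hy => LinearMap.mem_ker.mp (Submodule.span_le.mpr (fun z hz => ?_) hy)
    exact mem_tensorSub_iff.mp (hsE ⟨z, hz, rfl⟩) a c.ofConv (.inl ha)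
  exact mem_tensorSub_iff.mp (hxF rfl) b.ofConv _ (.inr hac)

variable {D : Type*} [AddCommGroup D] [Module k D] [Coalgebra k D]

/-- The ring homomorphism `D* → C*` dual to a coalgebra morphism `C → D`. -/
noncomputable def convDualMap (f : C →ₗc[k] D) : ConvDual k D →+* ConvDual k C where
  toFun b := toConv (b.ofConv ∘ₗ f.toLinearMap)
  map_one' := by ext; simp
  map_mul' a b := congrArg toConv (LinearMap.convMul_comp_coalgHom_distrib a b f)
  map_zero' := rfl
  map_add' _ _ := rfl

theorem range_mk_comp_convDualMap_eq_top {f : C →ₗc[k] D} (hf : Set.InjOn f (coradFilt k C 1))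
    {N : Ideal (ConvDual k C)} [N.IsTwoSided] (hN : IsOpenIdeal N) :
    ((Ideal.Quotient.mk N).comp (convDualMap f)).range = ⊤ := by
  have := hN.finite_quotient
  have : IsArtinianRing (ConvDual k C ⧸ N) := .of_finite k _
  refine subring_eq_top_of_sup_sq_eq_top (J := Ring.jacobson (ConvDual k C ⧸ N))
    IsSemiprimaryRing.isNilpotent (eq_top_iff.mpr fun r _ => ?_)
  obtain ⟨a, rfl⟩ := Ideal.Quotient.mk_surjective r
  obtain ⟨b, hb⟩ := exists_sub_comp_mem_dualAnnihilator (f := f.toLinearMap) hf a.ofConv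
  refine AddSubgroup.mem_sup.mpr ⟨_, ⟨toConv b, rfl⟩,
    Ideal.Quotient.mk N (a - convDualMap f (toConv b)),
    mk_mem_jacobson_pow_of_mem_dualAnnihilator_coradFilt hN hb, ?_⟩
  rw [RingHom.comp_apply, ← map_add, add_sub_cancel]

theorem exists_dual_apply_map_eq {f : C →ₗc[k] D} (hf : Set.InjOn f (coradFilt k C 1))
    (φ : Module.Dual k C) (x : C) : ∃ ψ : Module.Dual k D, ψ (f x) = φ x := by
  have hφ : Ideal.Quotient.mk (annGenerated (k := k) x) (toConv φ) ∈
      ((Ideal.Quotient.mk (annGenerated (k := k) x)).comp (convDualMap f)).range := by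
    rw [range_mk_comp_convDualMap_eq_top hf (isOpenIdeal_annGenerated x)]
    exact Subring.mem_top _
  obtain ⟨ψ, hψ⟩ := hφ
  have h : (convDualMap f ψ - toConv φ) x = 0 :=
    apply_eq_zero_of_mem_annGenerated (Ideal.Quotient.eq.mp hψ)
  exact ⟨ψ.ofConv, sub_eq_zero.mp h⟩

end ConvDual

/-- Heyneman–Radford: a coalgebra morphism `f : C → D` is injective
iff its restriction to the first term `C_(1)` of the coradical filtration is injective. -/
theorem coalgHom_injective_iff_injOn_coradFilt_one
    (D : Type*) [AddCommGroup D] [Module k D] [Coalgebra k D]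
    (f : C →ₗc[k] D) :
    Function.Injective f ↔ Set.InjOn f (coradFilt k C 1) := by
  refine ⟨fun h => h.injOn, fun hf => (injective_iff_map_eq_zero f).mpr fun x hx => ?_⟩
  refine (Module.forall_dual_apply_eq_zero_iff k x).mp fun φ => ?_
  obtain ⟨ψ, hψ⟩ := exists_dual_apply_map_eq hf φ x
  rw [← hψ, hx, map_zero]
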